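/- Let g ∈ SL(2,ℝ) act on the hyperbolic upper half-plane ℍ² by Möbius transformations (which are isometries for the hyperbolic metric). Then for every point x ∈ ℍ², the sequence n ↦ dist(gⁿ·x, x)/n converges as n → ∞ to the translation length τ(g) := inf_{y ∈ ℍ²} dist(g·y, y). That is, on the hyperbolic plane the stable translation length coincides with the translation length. -/

import Mathlib

open UpperHalfPlane

/-!
If `m` is the midpoint of `x` and `g • x`, then `g • m` is the midpoint of `g • x` and `g ^ 2 • x`.
In a Busemann convex space this forces `dist (g • m) m ≤ dist (g ^ 2 • x) x / 2`, so
`2 * τ(g) ≤ τ(g ^ 2)`; iterating along `g, g ^ 2, g ^ 4, …` bounds the stable translation length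
from below by `τ(g)`, and the triangle inequality bounds it from above.

The hyperbolic plane is Busemann convex: the hyperbolic median formula expresses `cosh` of the
distance between the midpoints of two sides of a triangle through `cosh` of the side lengths, and
what remains is nonnegativity of the Gram determinant of the triangle in the hyperboloid model,
which is a consequence of the triangle inequality alone.
-/

open Filter Topology

/-- The translation length `τ(g)` of `g` acting on `X`: the infimum of its displacements. -/
noncomputable def translationLength {M : Type*} (X : Type*) [PseudoMetricSpace X] [SMul M X]
    (g : M) : ℝ :=
  ⨅ x : X, dist (g • x) x

theorem translationLength_le_dist {M X : Type*} [PseudoMetricSpace X] [SMul M X] (g : M) (x : X) :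
    translationLength X g ≤ dist (g • x) x :=
  ciInf_le ⟨0, Set.forall_mem_range.2 fun _ => dist_nonneg⟩ x

theorem bddBelow_range_dist_pow_smul_div {M X : Type*} [Monoid M] [PseudoMetricSpace X] [SMul M X]
    (g : M) (x : X) : BddBelow (Set.range fun n : ℕ => dist (g ^ n • x) x / n) :=
  ⟨0, Set.forall_mem_range.2 fun _ => by positivity⟩

section StableTranslationLength

variable {M X : Type*} [Monoid M] [PseudoMetricSpace X] [MulAction M X] [IsIsometricSMul M X]

theorem subadditive_dist_pow_smul (g : M) (x : X) :
    Subadditive fun n : ℕ => dist (g ^ n • x) x := fun m n =>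
  calc
    dist (g ^ (m + n) • x) x ≤ dist (g ^ (m + n) • x) (g ^ m • x) + dist (g ^ m • x) x :=
      dist_triangle _ _ _
    _ = dist (g ^ m • x) x + dist (g ^ n • x) x := by
      rw [pow_add, mul_smul, dist_smul, add_comm]

/-- The stable translation length of `g` at `x`: the limit of `dist (g ^ n • x) x / n`, which
exists by Fekete's lemma. -/
noncomputable def stableTranslationLength (g : M) (x : X) : ℝ :=
  (subadditive_dist_pow_smul g x).lim

theorem tendsto_dist_pow_smul_div (g : M) (x : X) :
    Tendsto (fun n : ℕ => dist (g ^ n • x) x / n) atTop (𝓝 (stableTranslationLength g x)) :=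
  (subadditive_dist_pow_smul g x).tendsto_lim (bddBelow_range_dist_pow_smul_div g x)

theorem stableTranslationLength_le_dist (g : M) (x : X) :
    stableTranslationLength g x ≤ dist (g • x) x := by
  simpa [stableTranslationLength] using
    (subadditive_dist_pow_smul g x).lim_le_div (bddBelow_range_dist_pow_smul_div g x) one_ne_zero

theorem dist_dist_pow_smul_div_le (g : M) (x y : X) (n : ℕ) :
    dist (dist (g ^ n • x) x / n) (dist (g ^ n • y) y / n) ≤ 2 * dist x y / n :=
  calc
    dist (dist (g ^ n • x) x / n) (dist (g ^ n • y) y / n)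
        = dist (dist (g ^ n • x) x) (dist (g ^ n • y) y) / n := by
      simp only [Real.dist_eq, ← sub_div, abs_div, Nat.abs_cast]
    _ ≤ (dist (g ^ n • x) (g ^ n • y) + dist x y) / n := by
      gcongr
      exact dist_dist_dist_le _ _ _ _
    _ = 2 * dist x y / n := by rw [dist_smul, two_mul]

theorem stableTranslationLength_eq (g : M) (x y : X) :
    stableTranslationLength g x = stableTranslationLength g y := by
  have hdist : Tendsto (fun n : ℕ => dist (dist (g ^ n • x) x / n) (dist (g ^ n • y) y / n))
      atTop (𝓝 0) :=
    squeeze_zero (fun _ => dist_nonneg) (dist_dist_pow_smul_div_le g x y)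
      (tendsto_const_div_atTop_nhds_zero_nat _)
  exact tendsto_nhds_unique
    ((tendsto_iff_of_dist hdist).1 (tendsto_dist_pow_smul_div g x)) (tendsto_dist_pow_smul_div g y)

theorem stableTranslationLength_le_translationLength (g : M) (x : X) :
    stableTranslationLength g x ≤ translationLength X g :=
  have : Nonempty X := ⟨x⟩
  le_ciInf fun y => stableTranslationLength_eq g x y ▸ stableTranslationLength_le_dist g y

end StableTranslationLength

section Midpoint

variable {X : Type*} [PseudoMetricSpace X]

/-- `m` is a metric midpoint of `p` and `q`: it lies at distance `dist p q / 2` from both. -/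
def IsMetricMidpoint (m p q : X) : Prop :=
  dist m p = dist p q / 2 ∧ dist m q = dist p q / 2

theorem IsMetricMidpoint.smul {M : Type*} [SMul M X] [IsIsometricSMul M X] {m p q : X}
    (h : IsMetricMidpoint m p q) (g : M) : IsMetricMidpoint (g • m) (g • p) (g • q) := by
  simpa only [IsMetricMidpoint, dist_smul] using h

variable (X) in
/-- Busemann convexity, in its midpoint form: midpoints exist, and in every triangle the midpoints
of two sides are at most half as far apart as the endpoints of the third side. -/
class IsBusemannConvex : Prop where
  exists_isMetricMidpoint (p q : X) : ∃ m, IsMetricMidpoint m p q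
  dist_le_half_dist {m m' p q r : X} (hm : IsMetricMidpoint m p q)
    (hm' : IsMetricMidpoint m' q r) : dist m m' ≤ dist p r / 2

end Midpoint

section BusemannConvex

variable {M X : Type*} [Monoid M] [PseudoMetricSpace X] [IsBusemannConvex X] [MulAction M X]
  [IsIsometricSMul M X]

theorem two_mul_translationLength_le_dist_sq_smul (g : M) (x : X) :
    2 * translationLength X g ≤ dist (g ^ 2 • x) x := by
  obtain ⟨m, hm⟩ := IsBusemannConvex.exists_isMetricMidpoint x (g • x)
  have hgm : dist m (g • m) ≤ dist x (g • g • x) / 2 :=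
    IsBusemannConvex.dist_le_half_dist hm (hm.smul g)
  have hτ : translationLength X g ≤ dist (g • m) m := translationLength_le_dist g m
  rw [sq, mul_smul, dist_comm]
  rw [dist_comm] at hτ
  linarith

theorem two_pow_mul_translationLength_le_dist (g : M) (x : X) (k : ℕ) :
    2 ^ k * translationLength X g ≤ dist (g ^ 2 ^ k • x) x := by
  have : Nonempty X := ⟨x⟩
  induction k generalizing g x with
  | zero => simpa using translationLength_le_dist g x
  | succ k ih =>
    calc
      2 ^ (k + 1) * translationLength X g = 2 ^ k * (2 * translationLength X g) := by ring
      _ ≤ 2 ^ k * translationLength X (g ^ 2) := by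
        gcongr
        exact le_ciInf (two_mul_translationLength_le_dist_sq_smul g)
      _ ≤ dist ((g ^ 2) ^ 2 ^ k • x) x := ih (g ^ 2) x
      _ = dist (g ^ 2 ^ (k + 1) • x) x := by rw [← pow_mul, ← pow_succ']

theorem translationLength_le_stableTranslationLength (g : M) (x : X) :
    translationLength X g ≤ stableTranslationLength g x := by
  have hpow : Tendsto (fun k : ℕ => 2 ^ k) atTop atTop :=
    tendsto_pow_atTop_atTop_of_one_lt one_lt_two
  refine ge_of_tendsto' ((tendsto_dist_pow_smul_div g x).comp hpow) fun k => ?_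
  rw [Function.comp_apply, le_div_iff₀ (by positivity), mul_comm]
  exact_mod_cast two_pow_mul_translationLength_le_dist g x k

theorem stable_translation_length_eq_translation_length_general (g : M) (x : X) :
    Tendsto (fun n : ℕ => dist (g ^ n • x) x / n) atTop (𝓝 (translationLength X g)) :=
  have hτ : stableTranslationLength g x = translationLength X g :=
    (stableTranslationLength_le_translationLength g x).antisymm
      (translationLength_le_stableTranslationLength g x)
  hτ ▸ tendsto_dist_pow_smul_div g x

end BusemannConvex

section HyperbolicMidpoint

theorem two_mul_sq_cosh_half (t : ℝ) : 2 * Real.cosh (t / 2) ^ 2 = 1 + Real.cosh t := by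
  have h := Real.cosh_two_mul (t / 2)
  rw [Real.sinh_sq, mul_div_cancel₀ t two_ne_zero] at h
  linarith

theorem cosh_sq_add_cosh_sq_add_cosh_sq_le {α β γ : ℝ} (hγ : |γ| ≤ |α + β|)
    (hγ' : |α - β| ≤ |γ|) :
    Real.cosh α ^ 2 + Real.cosh β ^ 2 + Real.cosh γ ^ 2 ≤
      1 + 2 * Real.cosh α * Real.cosh β * Real.cosh γ := by
  have hprod : 0 ≤ (Real.cosh (α + β) - Real.cosh γ) * (Real.cosh γ - Real.cosh (α - β)) :=
    mul_nonneg (sub_nonneg.2 (Real.cosh_le_cosh.2 hγ)) (sub_nonneg.2 (Real.cosh_le_cosh.2 hγ'))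
  rw [Real.cosh_add, Real.cosh_sub] at hprod
  linear_combination hprod + Real.sinh β ^ 2 * Real.sinh_sq α
    + (Real.cosh α ^ 2 - 1) * Real.sinh_sq β

theorem cosh_dist_sq_add_sq_add_sq_le {X : Type*} [PseudoMetricSpace X] (p q r : X) :
    Real.cosh (dist p q) ^ 2 + Real.cosh (dist q r) ^ 2 + Real.cosh (dist p r) ^ 2 ≤
      1 + 2 * Real.cosh (dist p q) * Real.cosh (dist q r) * Real.cosh (dist p r) := by
  apply cosh_sq_add_cosh_sq_add_cosh_sq_le
  · rw [abs_of_nonneg dist_nonneg, abs_of_nonneg (by positivity)]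
    exact dist_triangle p q r
  · rw [abs_of_nonneg dist_nonneg, dist_comm q r]
    exact abs_dist_sub_le p r q

/-- `m` satisfies the hyperbolic median formula for `p` and `q`. In hyperbolic space, where
`cosh (dist u v)` is minus the Lorentzian product of the points `u` and `v` of the hyperboloid, this
says that `m` is the normalization of `p + q`. -/
def IsHyperbolicMidpoint {X : Type*} [PseudoMetricSpace X] (m p q : X) : Prop :=
  ∀ r, 2 * Real.cosh (dist p q / 2) * Real.cosh (dist m r) =
    Real.cosh (dist p r) + Real.cosh (dist q r)

namespace IsHyperbolicMidpoint

variable {X : Type*} [PseudoMetricSpace X] {m m' p q r : X}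

theorem symm (h : IsHyperbolicMidpoint m p q) : IsHyperbolicMidpoint m q p := fun r => by
  rw [dist_comm q p, h r, add_comm]

theorem dist_left (h : IsHyperbolicMidpoint m p q) : dist m p = dist p q / 2 := by
  have hcosh : Real.cosh (dist m p) = Real.cosh (dist p q / 2) := by
    apply mul_left_cancel₀ (mul_pos two_pos (Real.cosh_pos (dist p q / 2))).ne'
    rw [h p, dist_self, Real.cosh_zero, dist_comm q p, mul_assoc, ← sq, two_mul_sq_cosh_half]
  exact Real.cosh_injOn dist_nonneg (Set.mem_Ici.2 (by positivity)) hcosh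

theorem isMetricMidpoint (h : IsHyperbolicMidpoint m p q) : IsMetricMidpoint m p q :=
  ⟨h.dist_left, by rw [h.symm.dist_left, dist_comm]⟩

theorem dist_eq_zero_of_isMetricMidpoint (h : IsHyperbolicMidpoint m p q)
    (h' : IsMetricMidpoint m' p q) : dist m m' = 0 := by
  have hcosh : Real.cosh (dist m m') = Real.cosh 0 := by
    apply mul_left_cancel₀ (mul_pos two_pos (Real.cosh_pos (dist p q / 2))).ne'
    rw [h m', dist_comm p, dist_comm q, h'.1, h'.2, Real.cosh_zero]
    ring
  exact Real.cosh_injOn dist_nonneg Set.self_mem_Ici hcosh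

theorem of_isMetricMidpoint (h : IsHyperbolicMidpoint m p q) (h' : IsMetricMidpoint m' p q) :
    IsHyperbolicMidpoint m' p q := fun r => by
  have hr : dist (dist m r) (dist m' r) ≤ 0 :=
    (dist_dist_dist_le_left m m' r).trans_eq (h.dist_eq_zero_of_isMetricMidpoint h')
  rw [← dist_le_zero.1 hr, h r]

theorem four_mul_cosh_dist (hm : IsHyperbolicMidpoint m p q) (hm' : IsHyperbolicMidpoint m' q r) :
    4 * Real.cosh (dist p q / 2) * Real.cosh (dist q r / 2) * Real.cosh (dist m m') =
      1 + Real.cosh (dist p q) + Real.cosh (dist q r) + Real.cosh (dist p r) := by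
  have hmm' := hm m'
  have hm'p := hm' p
  have hm'q := hm' q
  rw [dist_comm p m', dist_comm q m'] at hmm'
  rw [dist_comm q p, dist_comm r p] at hm'p
  rw [dist_self, Real.cosh_zero, dist_comm r q] at hm'q
  linear_combination 2 * Real.cosh (dist q r / 2) * hmm' + hm'p + hm'q

theorem dist_le_half_dist (hm : IsHyperbolicMidpoint m p q) (hm' : IsHyperbolicMidpoint m' q r) :
    dist m m' ≤ dist p r / 2 := by
  have hpq := two_mul_sq_cosh_half (dist p q)
  have hqr := two_mul_sq_cosh_half (dist q r)
  have hpr := two_mul_sq_cosh_half (dist p r)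
  have hmm' := hm.four_mul_cosh_dist hm'
  have hgram := cosh_dist_sq_add_sq_add_sq_le p q r
  set A := Real.cosh (dist p q / 2)
  set B := Real.cosh (dist q r / 2)
  have hAB : 0 < 4 * A * B :=
    mul_pos (mul_pos four_pos (Real.cosh_pos _)) (Real.cosh_pos _)
  have hsq : (4 * A * B * Real.cosh (dist m m')) ^ 2 ≤
      (4 * A * B * Real.cosh (dist p r / 2)) ^ 2 :=
    calc
      (4 * A * B * Real.cosh (dist m m')) ^ 2
          = (1 + Real.cosh (dist p q) + Real.cosh (dist q r) + Real.cosh (dist p r)) ^ 2 := by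
        rw [hmm']
      _ ≤ 2 * (1 + Real.cosh (dist p q)) * (1 + Real.cosh (dist q r)) *
          (1 + Real.cosh (dist p r)) := by
        linear_combination hgram
      _ = (4 * A * B * Real.cosh (dist p r / 2)) ^ 2 := by
        rw [← hpq, ← hqr, ← hpr]
        ring
  have hcosh : Real.cosh (dist m m') ≤ Real.cosh (dist p r / 2) :=
    le_of_mul_le_mul_left
      (le_of_sq_le_sq hsq (mul_nonneg hAB.le (Real.cosh_pos _).le)) hAB
  rwa [Real.cosh_le_cosh, abs_of_nonneg dist_nonneg, abs_of_nonneg (by positivity)] at hcosh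

end IsHyperbolicMidpoint

theorem IsBusemannConvex.of_exists_isHyperbolicMidpoint {X : Type*} [PseudoMetricSpace X]
    (h : ∀ p q : X, ∃ m, IsHyperbolicMidpoint m p q) : IsBusemannConvex X where
  exists_isMetricMidpoint p q := (h p q).imp fun _ hm => hm.isMetricMidpoint
  dist_le_half_dist {_ _ p q r} hm hm' := by
    obtain ⟨_, hpq⟩ := h p q
    obtain ⟨_, hqr⟩ := h q r
    exact (hpq.of_isMetricMidpoint hm).dist_le_half_dist (hqr.of_isMetricMidpoint hm')

end HyperbolicMidpoint

section HyperbolicPlane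

/-- The right-hand side is linear in the hyperboloid coordinates `1 / z.im`, `z.re / z.im` and
`(z.re ^ 2 + z.im ^ 2) / z.im` of `z`. -/
theorem cosh_dist_upperHalfPlane (z w : ℍ) :
    Real.cosh (dist z w) =
      ((z.re ^ 2 + z.im ^ 2) / z.im - 2 * w.re * (z.re / z.im)
        + (w.re ^ 2 + w.im ^ 2) * (1 / z.im)) / (2 * w.im) := by
  rw [UpperHalfPlane.cosh_dist']
  field

theorem four_mul_im_mul_im_mul_sq_cosh_half_dist (p q : ℍ) :
    4 * p.im * q.im * Real.cosh (dist p q / 2) ^ 2 = (p.re - q.re) ^ 2 + (p.im + q.im) ^ 2 := by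
  have hcosh := UpperHalfPlane.cosh_dist' p q
  rw [eq_div_iff (by positivity)] at hcosh
  linear_combination 2 * p.im * q.im * two_mul_sq_cosh_half (dist p q) + hcosh

theorem exists_isHyperbolicMidpoint_upperHalfPlane (p q : ℍ) :
    ∃ m : ℍ, IsHyperbolicMidpoint m p q := by
  have hC := four_mul_im_mul_im_mul_sq_cosh_half_dist p q
  have hC₀ := Real.cosh_pos (dist p q / 2)
  set C := Real.cosh (dist p q / 2) with hCdef
  -- The hyperboloid coordinates of `m` are those of `p + q`, divided by `2 * C`.
  obtain ⟨m, hre, him⟩ : ∃ m : ℍ, m.re = (p.re * q.im + q.re * p.im) / (p.im + q.im) ∧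
      m.im = 2 * C * p.im * q.im / (p.im + q.im) :=
    ⟨⟨⟨_, _⟩, by positivity⟩, rfl, rfl⟩
  have h_inv_im : 2 * C * (1 / m.im) = 1 / p.im + 1 / q.im := by
    rw [him]
    field
  have h_re_div_im : 2 * C * (m.re / m.im) = p.re / p.im + q.re / q.im := by
    rw [hre, him]
    field
  have h_normSq_div_im : 2 * C * ((m.re ^ 2 + m.im ^ 2) / m.im) =
      (p.re ^ 2 + p.im ^ 2) / p.im + (q.re ^ 2 + q.im ^ 2) / q.im := by
    rw [hre, him]
    field_simp
    linear_combination p.im * q.im * hC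
  refine ⟨m, fun r => ?_⟩
  rw [← hCdef, cosh_dist_upperHalfPlane, cosh_dist_upperHalfPlane p, cosh_dist_upperHalfPlane q]
  linear_combination (h_normSq_div_im - 2 * r.re * h_re_div_im
    + (r.re ^ 2 + r.im ^ 2) * h_inv_im) / (2 * r.im)

instance : IsBusemannConvex ℍ :=
  .of_exists_isHyperbolicMidpoint exists_isHyperbolicMidpoint_upperHalfPlane

end HyperbolicPlane

/-- For `g ∈ SL(2,ℝ)` acting on the hyperbolic upper half-plane by Möbius transformations,
the stable translation length at any point `x` exists and equals the translation length
`τ(g) = ⨅ y, dist (g • y) y`. -/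
theorem stable_translation_length_eq_translation_length
    (g : Matrix.SpecialLinearGroup (Fin 2) ℝ) (x : UpperHalfPlane) :
    Filter.Tendsto (fun n : ℕ => dist (g ^ n • x) x / (n : ℝ)) Filter.atTop
      (nhds (⨅ y : UpperHalfPlane, dist (g • y) y)) :=
  stable_translation_length_eq_translation_length_general g x
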